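/- Let F be a field and let k ≤ n be positive integers. Let A be a k×n matrix over F in generalized Jordan normal form, with diagonal entries λ₁, …, λ_k and superdiagonal entries ε₁, …, ε_{k−1} ∈ {0,1}. Suppose there exist scalars c_{i,j}, c′_{i,j} ∈ F for 1 ≤ i < j ≤ k such that for every n×k matrix B over F one has Σ_{i<j} c_{i,j}(B_{i,j} − B_{j,i}) = Σ_{i<j} c′_{i,j}((AB)_{i,j} − (AB)_{j,i}). If c′_{i,j} ≠ 0 for some i < j, then λ_i = λ_j and the matrix A − λ_i·J_{k,n} has rank at most k − 2 (equivalently, the kernel of the linear map F^k → F^n given by the transpose (A − λ_i·J_{k,n})ᵀ has dimension at least 2). -/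

import Mathlib

open Matrix in
lemma aux_orth {F : Type*} [Field F] {k : ℕ} (T M : Matrix (Fin k) (Fin k) F) (d : Fin k → F) (lam : F)
    (hdiag : ∀ a, T a a = d a - lam)
    (htri : ∀ a b, a ≠ b → T a b ≠ 0 → a < b ∧ d a = d b)
    (hcomm : Tᵀ * M = M * T) :
    ∀ (N : ℕ) (a b : Fin k), (a : ℕ) + b ≤ N → d a ≠ d b → M a b = 0 := by
  intro N
  induction N using Nat.strong_induction_on with
  | _ N ih =>
  intro a b hN hab
  have h := congrFun (congrFun hcomm a) b
  simp only [Matrix.mul_apply, Matrix.transpose_apply] at h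
  rw [Finset.sum_eq_single a, Finset.sum_eq_single b, hdiag, hdiag] at h
  · have : (d a - d b) * M a b = 0 := by linear_combination h
    rcases mul_eq_zero.1 this with h | h
    · exact absurd (sub_eq_zero.1 h) hab
    · exact h
  · intro x _ hx
    by_cases hT : T x b = 0
    · simp [hT]
    · obtain ⟨h1, h2⟩ := htri x b hx hT
      have h1' : (x : ℕ) < b := h1
      rw [ih ((a : ℕ) + x) (by omega) a x le_rfl (by rw [h2]; exact hab), zero_mul]
  · simp
  · intro x _ hx
    by_cases hT : T x a = 0
    · simp [hT]
    · obtain ⟨h1, h2⟩ := htri x a hx hT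
      have h1' : (x : ℕ) < a := h1
      rw [ih ((x : ℕ) + b) (by omega) x b le_rfl (by rw [h2]; exact hab), mul_zero]
  · simp

lemma aux_nil {F : Type*} [Field F] {k : ℕ} (T : Matrix (Fin k) (Fin k) F) (d : Fin k → F) (lam : F)
    (hdiag : ∀ a, T a a = d a - lam)
    (htri : ∀ a b, a ≠ b → T a b ≠ 0 → a < b ∧ d a = d b) :
    ∀ (p : ℕ) (a b : Fin k), d a = lam → (T ^ p) b a ≠ 0 → (b : ℕ) + p ≤ a := by
  intro p
  induction p with
  | zero =>
    intro a b _ h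
    by_contra hc
    have : b ≠ a := by rintro rfl; simp at hc
    simp [Matrix.one_apply, this] at h
  | succ p ih =>
    intro a b ha h
    rw [pow_succ, Matrix.mul_apply] at h
    obtain ⟨x, _, hx⟩ := Finset.exists_ne_zero_of_sum_ne_zero h
    have h1 := left_ne_zero_of_mul hx
    have h2 := right_ne_zero_of_mul hx
    have hxa : x ≠ a := by
      rintro rfl
      rw [hdiag, ha, sub_self] at h2
      exact h2 rfl
    obtain ⟨h3, h4⟩ := htri x a hxa h2
    have h3' : (x : ℕ) < a := h3
    have := ih x b (h4.trans ha) h1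
    omega

open Matrix in
lemma aux_core {F : Type*} [Field F] {k : ℕ} (T S : Matrix (Fin k) (Fin k) F) (d : Fin k → F) (lam : F)
    (hdiag : ∀ a, T a a = d a - lam)
    (htri : ∀ a b, a ≠ b → T a b ≠ 0 → a < b ∧ d a = d b)
    (hcomm : Tᵀ * S = S * T) (hS : Sᵀ = -S)
    (h0 : ∀ x : Fin k → F, x ⬝ᵥ (S *ᵥ x) = 0)
    (h1 : ∀ x : Fin k → F, x ⬝ᵥ ((S * T) *ᵥ x) = 0)
    (i j : Fin k) (hij : S i j ≠ 0) (hi : d i = lam) :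
    d i = d j ∧ ∃ (p : ℕ) (x y : Fin k), (S * T ^ p) x x = 0 ∧ (S * T ^ p) y y = 0 ∧
      (S * T ^ p) x y ≠ 0 ∧ (S * T ^ p) y x ≠ 0 ∧
      (∀ a, (Tᵀ * (S * T ^ p)) a x = 0) ∧ (∀ a, (Tᵀ * (S * T ^ p)) a y = 0) := by
  have hdij : d i = d j := by
    by_contra hc
    exact hij (aux_orth T S d lam hdiag htri hcomm _ i j le_rfl hc)
  refine ⟨hdij, ?_⟩
  have hpow : ∀ m, (T ^ m)ᵀ * S = S * T ^ m := by
    intro m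
    induction m with
    | zero => simp
    | succ m ih =>
      rw [pow_succ, Matrix.transpose_mul, Matrix.mul_assoc, ih, ← Matrix.mul_assoc, hcomm,
        Matrix.mul_assoc, ← pow_succ', pow_succ]
  have hcommp : ∀ p, Tᵀ * (S * T ^ p) = S * T ^ (p + 1) := by
    intro p
    rw [← Matrix.mul_assoc, hcomm, Matrix.mul_assoc, ← pow_succ']
  have hanti : ∀ p a b, (S * T ^ p) a b = - (S * T ^ p) b a := by
    intro p a b
    have : (S * T ^ p)ᵀ = -(S * T ^ p) := by
      rw [Matrix.transpose_mul, hS, Matrix.mul_neg, hpow]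
    have h := congrFun (congrFun this b) a
    simpa using h
  have hentry : ∀ (M X : Matrix (Fin k) (Fin k) F), (∀ x : Fin k → F, x ⬝ᵥ (M *ᵥ x) = 0) →
      ∀ a, (Xᵀ * M * X) a a = 0 := by
    intro M X hM a
    have h := hM (fun b => X b a)
    rw [Matrix.mul_assoc, Matrix.mul_apply]
    simpa [dotProduct, Matrix.mulVec, Matrix.mul_apply] using h
  have hdiag0 : ∀ p a, (S * T ^ p) a a = 0 := by
    intro p a
    rcases Nat.even_or_odd' p with ⟨m, rfl | rfl⟩
    · have := hentry S (T ^ m) h0 a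
      rwa [hpow, Matrix.mul_assoc, ← pow_add, ← two_mul] at this
    · have := hentry (S * T) (T ^ m) h1 a
      rwa [← Matrix.mul_assoc, hpow, Matrix.mul_assoc, Matrix.mul_assoc, ← pow_succ',
        ← pow_add, show m + (m + 1) = 2 * m + 1 by ring] at this
  classical
  let P : ℕ → Prop := fun p => ∃ a b : Fin k, d a = lam ∧ (S * T ^ p) b a ≠ 0
  have hP0 : P 0 := ⟨j, i, hdij ▸ hi, by simpa using hij⟩
  have hPk : ∀ p, P p → p ≤ k := by
    rintro p ⟨a, b, ha, hb⟩
    rw [Matrix.mul_apply] at hb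
    obtain ⟨x, _, hx⟩ := Finset.exists_ne_zero_of_sum_ne_zero hb
    have := aux_nil T d lam hdiag htri p a x ha (right_ne_zero_of_mul hx)
    have := a.2
    omega
  obtain ⟨x, y, hx, hyx⟩ := Nat.findGreatest_spec (P := P) (Nat.zero_le k) hP0
  have hmax : ¬ P (Nat.findGreatest P k + 1) := by
    intro h
    have := Nat.le_findGreatest (hPk _ h) h
    omega
  generalize Nat.findGreatest P k = p at hyx hmax
  have hy : d y = lam := by
    by_contra hc
    refine hyx (aux_orth T (S * T ^ p) d lam hdiag htri ?_ _ y x le_rfl (by rw [hx]; exact hc))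
    rw [hcommp, Matrix.mul_assoc, ← pow_succ]
  have hz : ∀ u, d u = lam → ∀ a, (Tᵀ * (S * T ^ p)) a u = 0 := by
    intro u hu a
    rw [hcommp]
    by_contra hc
    exact hmax ⟨u, a, hu, hc⟩
  refine ⟨p, x, y, hdiag0 _ _, hdiag0 _ _, ?_, hyx, hz x hx, hz y hy⟩
  rw [hanti]
  exact neg_ne_zero.2 hyx

lemma aux_sum {F : Type*} [Field F] (k : ℕ) (c D : ℕ → ℕ → F) :
    ∑ i ∈ Finset.Icc 1 k, ∑ j ∈ Finset.Icc (i + 1) k, c i j * (D i j - D j i)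
    = ∑ i ∈ Finset.Icc 1 k, ∑ j ∈ Finset.Icc 1 k,
      ((if i < j then c i j else 0) - (if j < i then c j i else 0)) * D i j := by
  have e : ∀ i ∈ Finset.Icc 1 k, ∑ j ∈ Finset.Icc (i + 1) k, c i j * (D i j - D j i)
      = ∑ j ∈ Finset.Icc 1 k, (if i < j then c i j else 0) * (D i j - D j i) := by
    intro i _
    have : Finset.Icc (i + 1) k = (Finset.Icc 1 k).filter (fun j => i < j) := by
      ext j; simp only [Finset.mem_Icc, Finset.mem_filter]; omega
    rw [this, Finset.sum_filter]
    refine Finset.sum_congr rfl fun j _ => ?_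
    split_ifs <;> simp
  rw [Finset.sum_congr rfl e]
  simp only [mul_sub, sub_mul, Finset.sum_sub_distrib]
  congr 1
  rw [Finset.sum_comm]

lemma aux_fin {F : Type*} [Field F] (k : ℕ) (f : ℕ → F) :
    ∑ i ∈ Finset.Icc 1 k, f i = ∑ a : Fin k, f (a + 1) := by
  rw [Fin.sum_univ_eq_sum_range (fun a => f (a + 1)) k, Finset.range_eq_Ico,
    Finset.sum_Ico_add' f 0 k 1]
  rfl

/-- (Lemma `technical-second` of Osserman.)  Let `A` be a
`k × n` matrix over a field `F` (indexed by `{1, …, k} × {1, …, n}`) in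
generalized Jordan normal form, with diagonal entries `λ₁, …, λ_k` and
superdiagonal entries `ε₁, …, ε_{k-1} ∈ {0, 1}`.  Suppose scalars
`c_{i,j}, c'_{i,j}` (`1 ≤ i < j ≤ k`) satisfy, for every `n × k` matrix `B`,
`∑_{i<j} c_{i,j}(B_{i,j} - B_{j,i}) = ∑_{i<j} c'_{i,j}((AB)_{i,j} - (AB)_{j,i})`.
If `c'_{i,j} ≠ 0` for some `i < j`, then `λ_i = λ_j` and the kernel of the
linear map `F^k → F^n` given by the transpose of `A - λ_i J_{k,n}` has
dimension at least `2` (i.e. `A - λ_i J_{k,n}` has rank at most `k - 2`). -/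
theorem statement13 (F : Type*) [Field F] (k n : ℕ) (hk : 1 ≤ k) (hkn : k ≤ n)
    (A : ℕ → ℕ → F) (lam eps : ℕ → F)
    (hlam : ∀ i, 1 ≤ i → i ≤ k → lam i = A i i)
    (heps : ∀ i, 1 ≤ i → i < k → eps i = A i (i + 1))
    (heps0 : eps 0 = 0) (hepsk : eps k = 0)
    (heps01 : ∀ i, 1 ≤ i → i < k → eps i = 0 ∨ eps i = 1)
    (hAzero : ∀ i j, 1 ≤ i → i ≤ k → 1 ≤ j → j ≤ k → j ≠ i → j ≠ i + 1 →
      A i j = 0)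
    (hblock : ∀ i, 1 ≤ i → i < k → eps i = 1 → lam (i + 1) = lam i)
    (c c' : ℕ → ℕ → F)
    (hident : ∀ B : ℕ → ℕ → F,
      ∑ i ∈ Finset.Icc 1 k, ∑ j ∈ Finset.Icc (i + 1) k,
        c i j * (B i j - B j i)
      = ∑ i ∈ Finset.Icc 1 k, ∑ j ∈ Finset.Icc (i + 1) k,
          c' i j * ((∑ l ∈ Finset.Icc 1 n, A i l * B l j)
            - (∑ l ∈ Finset.Icc 1 n, A j l * B l i))) :
    ∀ i j, 1 ≤ i → i < j → j ≤ k → c' i j ≠ 0 →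
      lam i = lam j ∧
      2 ≤ Module.finrank F
        ↥(LinearMap.ker (Matrix.mulVecLin (Matrix.transpose
          (Matrix.of fun (a : Fin k) (b : Fin n) =>
            A (a + 1) (b + 1) -
              if (a : ℕ) = (b : ℕ) then lam i else 0)))) := by
  intro i j hi1 hij hjk hc
  have key : ∀ l q, 1 ≤ l → l ≤ n → 1 ≤ q → q ≤ k →
      ∑ a ∈ Finset.Icc 1 k, A a l * ((if a < q then c' a q else 0) - (if q < a then c' q a else 0))
      = if l ≤ k then ((if l < q then c l q else 0) - (if q < l then c q l else 0)) else 0 := by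
    intro l q hl1 hln hq1 hqk
    have h := hident (fun m r => if m = l then (if r = q then 1 else 0) else 0)
    rw [aux_sum k c (fun m r => if m = l then (if r = q then 1 else 0) else 0),
      aux_sum k c' (fun i j => ∑ m ∈ Finset.Icc 1 n, A i m * (if m = l then (if j = q then 1 else 0) else 0))] at h
    simp only [mul_ite, mul_one, mul_zero, Finset.sum_ite_eq', Finset.mem_Icc, hl1, hln, hq1, hqk,
      and_self, if_true, true_and] at h
    have h2 : ∀ i ∈ Finset.Icc 1 k, (∑ j ∈ Finset.Icc 1 k, if i = l then (if j = q then
        ((if i < j then c i j else 0) - (if j < i then c j i else 0)) else 0) else 0)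
        = if i = l then ((if i < q then c i q else 0) - (if q < i then c q i else 0)) else 0 := by
      intro i _
      by_cases hil : i = l
      · simp only [hil, if_true, Finset.sum_ite_eq', Finset.mem_Icc, hq1, hqk, and_self]
      · simp [hil]
    rw [Finset.sum_congr rfl h2] at h
    simp only [Finset.sum_ite_eq', Finset.mem_Icc, hl1, true_and] at h
    rw [h]
    exact Finset.sum_congr rfl fun a _ => mul_comm _ _
  let L : Matrix (Fin k) (Fin k) F := Matrix.of fun a b => if (a : ℕ) < b then c' (a + 1) (b + 1) else 0
  let L' : Matrix (Fin k) (Fin k) F := Matrix.of fun a b => if (a : ℕ) < b then c (a + 1) (b + 1) else 0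
  let S := L - L.transpose
  let C := L' - L'.transpose
  let T : Matrix (Fin k) (Fin k) F := Matrix.of fun a b =>
    A (a + 1) (b + 1) - if (a : ℕ) = (b : ℕ) then lam i else 0
  have keyF : ∀ (l : Fin n) (q : Fin k), ∑ a : Fin k, A (a + 1) (l + 1) * S a q
      = if h : (l : ℕ) < k then C ⟨l, h⟩ q else 0 := by
    intro l q
    have h := key (l + 1) (q + 1) (by omega) (by omega) (by omega) (by omega)
    rw [aux_fin] at h
    simp only [add_lt_add_iff_right, Nat.succ_le_iff] at h
    refine Eq.trans ?_ (h.trans ?_)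
    · rfl
    · by_cases hl : (l : ℕ) < k
      · rw [if_pos hl, dif_pos hl]
        rfl
      · rw [if_neg hl, dif_neg hl]
  have altS : ∀ (M : Matrix (Fin k) (Fin k) F) (x : Fin k → F),
      dotProduct x ((M - M.transpose).mulVec x) = 0 := by
    intro M x
    rw [Matrix.sub_mulVec, dotProduct_sub, Matrix.dotProduct_mulVec x M x, ← Matrix.mulVec_transpose,
      dotProduct_comm, sub_self]
  have hTS : T.transpose * S = C - lam i • S := by
    ext l q
    have h := keyF ⟨l, by omega⟩ q
    simp only [Fin.is_lt, dif_pos] at h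
    rw [Matrix.mul_apply]
    simp only [Matrix.transpose_apply, T, Matrix.of_apply, sub_mul, Finset.sum_sub_distrib]
    rw [h]
    simp [← Fin.ext_iff]
  have hSt : S.transpose = -S := by simp [S]
  have hCt : C.transpose = -C := by simp [C]
  have hcomm : T.transpose * S = S * T := by
    have h := congrArg Matrix.transpose hTS
    rw [Matrix.transpose_mul, Matrix.transpose_transpose, hSt, Matrix.transpose_sub,
      Matrix.transpose_smul, hSt, hCt] at h
    rw [hTS]
    have : S * T = -(-S * T) := by simp
    rw [this, h, smul_neg]
    abel
  have h1 : ∀ x : Fin k → F, dotProduct x ((S * T).mulVec x) = 0 := by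
    intro x
    rw [← hcomm, hTS, Matrix.sub_mulVec, dotProduct_sub, Matrix.smul_mulVec, dotProduct_smul]
    simp only [S, C, altS]
    simp
  have hii : i - 1 + 1 = i := by omega
  have hjj : j - 1 + 1 = j := by omega
  obtain ⟨hd, p, x, y, hxx, hyy, hxy, hyx, hx, hy⟩ := aux_core T S (fun a => lam (a + 1)) (lam i)
    (by intro a; simp [T, hlam (a + 1) (by omega) (by omega)])
    (by
      intro a b hab hT
      have hab' : (a : ℕ) ≠ b := fun h => hab (Fin.ext h)
      simp only [T, Matrix.of_apply, hab', if_false, sub_zero] at hT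
      have hb : (b : ℕ) = a + 1 := by
        by_contra hcon
        exact hT (hAzero _ _ (by omega) (by omega) (by omega) (by omega) (by omega) (by omega))
      refine ⟨Fin.lt_def.2 (by omega), ?_⟩
      have hb2 := b.2
      rw [hb] at hT ⊢
      rw [← heps (a + 1) (by omega) (by omega)] at hT
      have := (heps01 (a + 1) (by omega) (by omega)).resolve_left hT
      exact (hblock (a + 1) (by omega) (by omega) this).symm)
    hcomm hSt (altS L) h1 ⟨i - 1, by omega⟩ ⟨j - 1, by omega⟩
    (by
      have e1 : i - 1 < j - 1 := by omega
      have e2 : ¬ (j - 1 < i - 1) := by omega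
      simpa [S, L, e1, e2, hii, hjj] using hc)
    (by simp [hii])
  simp only [hii, hjj] at hd
  refine ⟨hd, ?_⟩
  set M := S * T ^ p with hM
  have hker : ∀ u : Fin k, (∀ a, (T.transpose * M) a u = 0) →
      (fun a => M a u) ∈ LinearMap.ker (Matrix.mulVecLin (Matrix.transpose
          (Matrix.of fun (a : Fin k) (b : Fin n) =>
            A (a + 1) (b + 1) -
              if (a : ℕ) = (b : ℕ) then lam i else 0))) := by
    intro u hu
    rw [LinearMap.mem_ker]
    ext b
    simp only [Matrix.mulVecLin_apply, Matrix.mulVec, dotProduct, Matrix.transpose_apply,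
      Matrix.of_apply, Pi.zero_apply]
    by_cases hb : (b : ℕ) < k
    · have := hu ⟨b, hb⟩
      simpa [Matrix.mul_apply, T] using this
    · have e : ∀ a : Fin k, (a : ℕ) ≠ b := by intro a; omega
      simp only [e, if_false, sub_zero, hM, Matrix.mul_apply, Finset.mul_sum]
      rw [Finset.sum_comm]
      refine Finset.sum_eq_zero fun z _ => ?_
      have := keyF b z
      rw [dif_neg hb] at this
      simp only [← mul_assoc]
      rw [← Finset.sum_mul, this, zero_mul]
  have hli : LinearIndependent F ![(⟨_, hker x hx⟩ : LinearMap.ker (Matrix.mulVecLin (Matrix.transpose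
          (Matrix.of fun (a : Fin k) (b : Fin n) =>
            A (a + 1) (b + 1) -
              if (a : ℕ) = (b : ℕ) then lam i else 0)))), ⟨_, hker y hy⟩] := by
    rw [LinearIndependent.pair_iff]
    intro s t hst
    have h := congrArg Subtype.val hst
    have hX := congrFun h x
    have hY := congrFun h y
    simp [hxx, hyy, hxy, hyx] at hX hY
    exact ⟨hY, hX⟩
  simpa using hli.fintype_card_le_finrank
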